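/- arXiv:1708.06640 — 6 statements merged into one kernel-verified Lean document; each statement's English description precedes it below -/
import Mathlib

section
/- Let K be a commutative ring, n and k natural numbers with k ≤ n, and let S, T, U, V be subsets of {1,…,n} each of size k. Let j = |S ∩ V|. If |S ∩ V| = |T ∩ U| and |S ∩ V| ≥ k−1, then ∑_{P ∈ 𝒫_n} [P]_{S,T}·[P^{-1}]_{U,V} = j!·(n−2k+j)!·(−1)^{s(T,U)+s(S,V)} (where the factorials are natural numbers cast into K and −1 is the negation of the multiplicative identity of K); otherwise ∑_{P ∈ 𝒫_n} [P]_{S,T}·[P^{-1}]_{U,V} = 0. -/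
/-- `[A]_{S,T}`: the determinant of the submatrix of `A` with rows indexed by `S` and
columns indexed by `T`, both taken in increasing order. -/
def minorDet {K : Type} [CommRing K] {m p : ℕ} (A : Matrix (Fin m) (Fin p) K)
    (S : Finset (Fin m)) (T : Finset (Fin p)) : K :=
  if h : T.card = S.card then (A.submatrix (S.orderEmbOfFin rfl) (T.orderEmbOfFin h)).det else 0

/-- `r(t, X)`: the number of elements of `X` that are less than `t`. -/
def rless {n : ℕ} (t : Fin n) (X : Finset (Fin n)) : ℕ := (X.filter (fun x => x < t)).card

/-- `s(X, Y) = ∑_{t ∈ X ∖ Y} r(t,X) − ∑_{t ∈ Y ∖ X} r(t,Y)`. -/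
def sSign {n : ℕ} (X Y : Finset (Fin n)) : ℤ :=
  (∑ t ∈ X \ Y, (rless t X : ℤ)) - ∑ t ∈ Y \ X, (rless t Y : ℤ)


def invS (K : Type) [CommRing K] {n : ℕ} (π : Equiv.Perm (Fin n)) (S : Finset (Fin n)) : K :=
  ∏ b ∈ S, ∏ a ∈ S, if a < b then (if π a < π b then 1 else -1) else 1

theorem minorDet_eq {K : Type} [CommRing K] {n k : ℕ} (A : Matrix (Fin n) (Fin n) K)
    (S T : Finset (Fin n)) (hS : S.card = k) (hT : T.card = k) :
    minorDet A S T = (A.submatrix (S.orderEmbOfFin hS) (T.orderEmbOfFin hT)).det := by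
  subst hS
  simp [minorDet, hT]

theorem minorDet_perm {K : Type} [CommRing K] {n k : ℕ} (π : Equiv.Perm (Fin n))
    (S T : Finset (Fin n)) (hS : S.card = k) (hT : T.card = k) :
    minorDet (π.permMatrix K) S T = if S.image π = T then invS K π S else 0 := by
  rw [minorDet_eq _ S T hS hT]
  split_ifs with h
  · have hmem : ∀ i : Fin k, ∃ j : Fin k, T.orderEmbOfFin hT j = π (S.orderEmbOfFin hS i) := by
      intro i
      have h1 : π (S.orderEmbOfFin hS i) ∈ T := by
        rw [← h]; exact Finset.mem_image_of_mem _ (Finset.orderEmbOfFin_mem _ _ _)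
      have h2 : π (S.orderEmbOfFin hS i) ∈ Set.range (T.orderEmbOfFin hT) := by
        rw [Finset.range_orderEmbOfFin]; exact h1
      exact h2
    choose f hf using hmem
    have finj : Function.Injective f := by
      intro a b hab
      have := hf a
      rw [hab, hf b] at this
      exact ((S.orderEmbOfFin hS).injective (π.injective this)).symm
    let σ : Equiv.Perm (Fin k) := Equiv.ofBijective f (Finite.injective_iff_bijective.mp finj)
    have hσ : ∀ i, T.orderEmbOfFin hT (σ i) = π (S.orderEmbOfFin hS i) := hf
    have hm : (π.permMatrix K).submatrix (S.orderEmbOfFin hS) (T.orderEmbOfFin hT)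
        = σ.permMatrix K := by
      ext i j
      simp only [Matrix.submatrix_apply, PEquiv.toMatrix_apply, Equiv.toPEquiv_apply,
        Option.mem_def, Option.some.injEq, ← hσ]
      simp
    rw [hm, Matrix.det_permutation, Equiv.Perm.sign_eq_prod_prod_Iio, invS]
    have key : ∀ g : Fin n → K, ∏ b ∈ S, g b = ∏ i : Fin k, g (S.orderEmbOfFin hS i) := by
      intro g
      conv_lhs => rw [← Finset.map_orderEmbOfFin_univ S hS]
      rw [Finset.prod_map]
      rfl
    rw [key]
    push_cast
    refine Finset.prod_congr rfl fun i _ => ?_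
    rw [key, ← Finset.prod_filter_mul_prod_filter_not Finset.univ (fun j => j < i)]
    rw [Finset.prod_congr (s₂ := Finset.univ.filter (fun j => ¬ j < i)) rfl
      (g := fun _ => (1 : K))]
    · rw [Finset.prod_const_one, mul_one]
      refine Finset.prod_congr (by ext; simp) fun j hj => ?_
      have hj' : j < i := by simpa using hj
      simp only [(S.orderEmbOfFin hS).lt_iff_lt, hj', if_true, ← hσ,
        (T.orderEmbOfFin hT).lt_iff_lt]
      split_ifs <;> simp
    · intro j hj
      have hj' : ¬ j < i := by simpa using hj
      simp only [(S.orderEmbOfFin hS).lt_iff_lt, hj', if_false]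
  · have : ∃ a ∈ S, π a ∉ T := by
      by_contra hc
      push Not at hc
      apply h
      apply Finset.eq_of_subset_of_card_le
      · intro x hx
        obtain ⟨a, ha, rfl⟩ := Finset.mem_image.mp hx
        exact hc a ha
      · rw [Finset.card_image_of_injective _ π.injective, hS, hT]
    obtain ⟨a, ha, haT⟩ := this
    have h2 : a ∈ Set.range (S.orderEmbOfFin hS) := by
      rw [Finset.range_orderEmbOfFin]; exact ha
    obtain ⟨i, rfl⟩ := h2
    apply Matrix.det_eq_zero_of_row_eq_zero i
    intro j
    simp only [Matrix.submatrix_apply, PEquiv.toMatrix_apply, Equiv.toPEquiv_apply,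
        Option.mem_def, Option.some.injEq]
    rw [if_neg]
    intro he
    exact haT (he ▸ Finset.orderEmbOfFin_mem _ _ _)

theorem minorDet_perm_inv {K : Type} [CommRing K] {n k : ℕ} (π : Equiv.Perm (Fin n))
    (U V : Finset (Fin n)) (hU : U.card = k) (hV : V.card = k) :
    minorDet ((π⁻¹).permMatrix K) U V = if V.image π = U then invS K π V else 0 := by
  rw [← minorDet_perm π V U hV hU, minorDet_eq _ U V hU hV, minorDet_eq _ V U hV hU,
    ← Matrix.transpose_permMatrix, ← Matrix.transpose_submatrix, Matrix.det_transpose]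

theorem pow_rless {K : Type} [CommRing K] {n : ℕ} (a : Fin n) (W : Finset (Fin n)) :
    (-1 : K) ^ rless a W = ∏ x ∈ W, if x < a then -1 else 1 := by
  rw [rless, ← Finset.prod_const, Finset.prod_filter]

theorem invS_insert {K : Type} [CommRing K] {n : ℕ} (π : Equiv.Perm (Fin n))
    (a : Fin n) (W : Finset (Fin n)) (ha : a ∉ W) :
    invS K π (insert a W) =
      invS K π W * ((-1) ^ rless a W * (-1) ^ rless (π a) (W.image π)) := by
  unfold invS
  simp_rw [Finset.prod_insert ha]
  rw [pow_rless, pow_rless,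
    Finset.prod_image π.injective.injOn, ← Finset.prod_mul_distrib, Finset.prod_mul_distrib]
  simp only [lt_irrefl, if_false, one_mul]
  rw [← mul_assoc, ← Finset.prod_mul_distrib, mul_comm]
  congr 1
  refine Finset.prod_congr rfl fun x hx => ?_
  have hne : x ≠ a := fun h => ha (h ▸ hx)
  have hne' : π x ≠ π a := fun h => hne (π.injective h)
  rcases lt_or_gt_of_ne hne with h | h <;> rcases lt_or_gt_of_ne hne' with h' | h' <;>
    simp [h, h', h.le, h'.le, not_lt.mpr h.le, not_lt.mpr h'.le]

theorem rless_insert_self {n : ℕ} (a : Fin n) (W : Finset (Fin n)) :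
    rless a (insert a W) = rless a W := by
  simp [rless, Finset.filter_insert]

theorem sq_neg_one_pow {K : Type} [CommRing K] (m : ℕ) : ((-1 : K) ^ m) * (-1) ^ m = 1 := by
  rw [← mul_pow]; simp

theorem invS_sq {K : Type} [CommRing K] {n : ℕ} (π : Equiv.Perm (Fin n))
    (W : Finset (Fin n)) : invS K π W * invS K π W = 1 := by
  induction W using Finset.induction_on with
  | empty => simp [invS]
  | insert a W ha ih =>
    rw [invS_insert π a W ha]
    linear_combination ((-1) ^ rless a W * (-1) ^ rless (π a) (W.image π)) ^ 2 * ih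
      + ((-1) ^ rless (π a) (W.image π)) ^ 2 * sq_neg_one_pow (K := K) (rless a W) +
      sq_neg_one_pow (K := K) (rless (π a) (W.image π))

theorem invS_congr {K : Type} [CommRing K] {n : ℕ} (π ρ : Equiv.Perm (Fin n))
    (W : Finset (Fin n)) (h : ∀ x ∈ W, π x = ρ x) : invS K π W = invS K ρ W := by
  unfold invS
  refine Finset.prod_congr rfl fun b hb => Finset.prod_congr rfl fun a ha => ?_
  rw [h a ha, h b hb]

theorem invS_swap {K : Type} [CommRing K] {n : ℕ} (π : Equiv.Perm (Fin n))
    (S : Finset (Fin n)) (a b : Fin n) (ha : a ∈ S) (hb : b ∈ S) (hab : a ≠ b) :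
    invS K (π * Equiv.swap a b) S = - invS K π S := by
  obtain ⟨W, haW, hbW, rfl⟩ : ∃ W : Finset (Fin n), a ∉ insert b W ∧ b ∉ W ∧
      S = insert a (insert b W) := by
    refine ⟨(S.erase a).erase b, ?_, ?_, ?_⟩
    · simp [hab]
    · simp
    · ext x; simp; grind
  have haW' : a ∉ W := fun h => haW (Finset.mem_insert_of_mem h)
  have hfix : ∀ x ∈ W, (π * Equiv.swap a b) x = π x := by
    intro x hx
    rw [Equiv.Perm.mul_apply, Equiv.swap_apply_of_ne_of_ne]
    · rintro rfl; exact haW' hx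
    · rintro rfl; exact hbW hx
  have him : W.image (π * Equiv.swap a b) = W.image π := Finset.image_congr hfix
  rw [invS_insert _ a _ haW, invS_insert _ b _ hbW, invS_insert _ a _ haW, invS_insert _ b _ hbW,
    Finset.image_insert, Finset.image_insert, him, invS_congr _ π W hfix]
  simp only [Equiv.Perm.mul_apply, Equiv.swap_apply_left, Equiv.swap_apply_right]
  have hins : ∀ x y : Fin n, y ∉ W.image π → (-1 : K) ^ rless x (insert y (W.image π)) =
      (if y < x then -1 else 1) * (-1) ^ rless x (W.image π) := by
    intro x y hy
    rw [pow_rless, Finset.prod_insert hy, ← pow_rless]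
  rw [hins _ _ (by simpa using haW'), hins _ _ (by simpa using hbW)]
  have hne' : π a ≠ π b := fun h => hab (π.injective h)
  rcases lt_or_gt_of_ne hne' with h | h <;> simp [h, not_lt.mpr h.le] <;> ring

def clsF {n : ℕ} (S V : Finset (Fin n)) (x : Fin n) : Bool × Bool :=
  (decide (x ∈ S), decide (x ∈ V))

theorem clsF_card {n : ℕ} (S V : Finset (Fin n)) (i : Bool × Bool) :
    Fintype.card {a // clsF S V a = i} =
      match i with
      | (true, true) => (S ∩ V).card
      | (true, false) => (S \ V).card
      | (false, true) => (V \ S).card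
      | (false, false) => n - (S ∪ V).card := by
  rw [Fintype.card_subtype]
  rcases i with ⟨_ | _, _ | _⟩
  · have : n - (S ∪ V).card = ((S ∪ V)ᶜ).card := by rw [Finset.card_compl, Fintype.card_fin]
    simp only [this]
    congr 1; ext x; simp [clsF]
  all_goals
    simp only
    congr 1; ext x; simp [clsF, and_comm]

theorem image_iff {n : ℕ} (π : Equiv.Perm (Fin n)) (S T : Finset (Fin n)) :
    S.image π = T ↔ ∀ x, π x ∈ T ↔ x ∈ S := by
  constructor
  · rintro rfl x; simp
  · intro h
    ext y
    obtain ⟨x, rfl⟩ := π.surjective y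
    simp [h]

theorem clsF_iff {n : ℕ} (π : Equiv.Perm (Fin n)) (S T U V : Finset (Fin n)) :
    (S.image π = T ∧ V.image π = U) ↔ clsF T U ∘ π = clsF S V := by
  rw [image_iff, image_iff, funext_iff, ← forall_and]
  refine forall_congr' fun x => ?_
  simp [clsF]

theorem count_perm {n k : ℕ} (S T U V : Finset (Fin n))
    (hS : S.card = k) (hT : T.card = k) (hU : U.card = k) (hV : V.card = k)
    (hc : (S ∩ V).card = (T ∩ U).card) (h1 : k - 1 ≤ (S ∩ V).card) :
    (Finset.univ.filter fun π : Equiv.Perm (Fin n) => S.image π = T ∧ V.image π = U).card =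
      (S ∩ V).card.factorial * (n - (2 * k - (S ∩ V).card)).factorial := by
  have a1 := Finset.card_sdiff_add_card_inter S V
  have a2 := Finset.card_sdiff_add_card_inter V S
  have a3 := Finset.card_sdiff_add_card_inter T U
  have a4 := Finset.card_sdiff_add_card_inter U T
  have a5 := Finset.card_union_add_card_inter S V
  have a6 := Finset.card_union_add_card_inter T U
  rw [Finset.inter_comm V S] at a2
  rw [Finset.inter_comm U T] at a4
  have hfib : ∀ i, Nonempty ({a // clsF S V a = i} ≃ {a // clsF T U a = i}) := by
    intro i
    apply Fintype.card_eq.mp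
    rw [clsF_card, clsF_card]
    rcases i with ⟨_ | _, _ | _⟩ <;> simp only <;> omega
  let e : Equiv.Perm (Fin n) := Equiv.ofFiberEquiv fun i => (hfib i).some
  have he : clsF T U ∘ e = clsF S V := funext fun x => Equiv.ofFiberEquiv_map _ x
  have he' : clsF S V ∘ e.symm = clsF T U := by
    rw [← he]; ext x <;> simp
  have hst := DomMulAct.stabilizer_card (clsF S V)
  rw [← Fintype.card_subtype]
  have hEq : Fintype.card {π : Equiv.Perm (Fin n) // S.image π = T ∧ V.image π = U} =
      Fintype.card {g : Equiv.Perm (Fin n) // clsF S V ∘ g = clsF S V} := by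
    apply Fintype.card_congr
    refine Equiv.subtypeEquiv (Equiv.mulLeft e⁻¹) fun π => ?_
    rw [clsF_iff]
    have : clsF S V ∘ ⇑((Equiv.mulLeft e⁻¹) π) = clsF T U ∘ π := by
      rw [← he']; rfl
    rw [this]
  rw [hEq, hst, Fintype.prod_prod_type]
  simp only [Fintype.prod_bool, clsF_card]
  have b1 : (S \ V).card.factorial = 1 := Nat.factorial_eq_one.mpr (by omega)
  have b2 : (V \ S).card.factorial = 1 := Nat.factorial_eq_one.mpr (by omega)
  rw [b1, b2, show (S ∪ V).card = 2 * k - (S ∩ V).card by omega]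
  ring

theorem zpow_sign {K : Type} [CommRing K] (a b c d : ℕ) :
    (((-1 : Kˣ) ^ (((a : ℤ) - b) + ((c : ℤ) - d)) : Kˣ) : K) =
      (-1) ^ a * (-1) ^ b * ((-1) ^ c * (-1) ^ d) := by
  rw [zpow_add, zpow_sub, zpow_sub]
  simp [← inv_pow]

theorem term_sign {K : Type} [CommRing K] {n k : ℕ} (S T U V : Finset (Fin n))
    (hS : S.card = k) (hT : T.card = k) (hU : U.card = k) (hV : V.card = k)
    (hc : (S ∩ V).card = (T ∩ U).card) (h1 : k - 1 ≤ (S ∩ V).card)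
    (π : Equiv.Perm (Fin n)) (hπ : S.image π = T) (hπ' : V.image π = U) :
    invS K π S * invS K π V = (((-1 : Kˣ) ^ (sSign T U + sSign S V) : Kˣ) : K) := by
  have a1 := Finset.card_sdiff_add_card_inter S V
  have a2 := Finset.card_sdiff_add_card_inter V S
  rw [Finset.inter_comm V S] at a2
  subst hπ hπ'
  by_cases hk : (S ∩ V).card = k
  · have e1 : S \ V = ∅ := Finset.card_eq_zero.mp (by omega)
    have e2 : S = V := Finset.eq_of_subset_of_card_le (Finset.sdiff_eq_empty_iff_subset.mp e1)
      (by omega)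
    subst e2
    rw [invS_sq]
    simp [sSign]
  · have := Finset.card_le_card (Finset.inter_subset_left (s₁ := S) (s₂ := V))
    obtain ⟨s, hs⟩ := Finset.card_eq_one.mp (show (S \ V).card = 1 by omega)
    obtain ⟨v, hv⟩ := Finset.card_eq_one.mp (show (V \ S).card = 1 by omega)
    have hs' : s ∈ S \ V := by simp [hs]
    have hv' : v ∈ V \ S := by simp [hv]
    rw [Finset.mem_sdiff] at hs' hv'
    have eS : S = insert s (S ∩ V) := by
      rw [Finset.insert_eq, ← hs, Finset.sdiff_union_inter]
    have eV : V = insert v (S ∩ V) := by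
      rw [Finset.insert_eq, ← hv, Finset.inter_comm, Finset.sdiff_union_inter]
    have i1 : invS K π S = invS K π (S ∩ V) * ((-1) ^ rless s S * (-1) ^ rless (π s) (S.image π)) := by
      have := invS_insert (K := K) π s (S ∩ V) (by simp [hs'])
      rw [← rless_insert_self s, ← rless_insert_self (π s), ← Finset.image_insert, ← eS] at this
      exact this
    have i2 : invS K π V = invS K π (S ∩ V) * ((-1) ^ rless v V * (-1) ^ rless (π v) (V.image π)) := by
      have := invS_insert (K := K) π v (S ∩ V) (by simp [hv'])
      rw [← rless_insert_self v, ← rless_insert_self (π v), ← Finset.image_insert, ← eV] at this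
      exact this
    unfold sSign
    rw [← Finset.image_sdiff _ _ π.injective, ← Finset.image_sdiff _ _ π.injective, hs, hv]
    simp only [Finset.image_singleton, Finset.sum_singleton]
    rw [zpow_sign, i1, i2]
    linear_combination ((-1) ^ rless s S * (-1) ^ rless (π s) (S.image π)) *
      ((-1) ^ rless v V * (-1) ^ rless (π v) (V.image π)) * invS_sq (K := K) π (S ∩ V)

theorem stmt_0 {K : Type} [CommRing K] (n k : ℕ) (hkn : k ≤ n)
    (S T U V : Finset (Fin n))
    (hS : S.card = k) (hT : T.card = k) (hU : U.card = k) (hV : V.card = k)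
    (j : ℕ) (hj : j = (S ∩ V).card) :
    ∑ π : Equiv.Perm (Fin n),
        minorDet (π.permMatrix K) S T * minorDet ((π⁻¹).permMatrix K) U V =
      if (S ∩ V).card = (T ∩ U).card ∧ k - 1 ≤ (S ∩ V).card then
        ((j.factorial * (n - (2 * k - j)).factorial : ℕ) : K) *
          (((-1 : Kˣ) ^ (sSign T U + sSign S V) : Kˣ) : K)
      else 0 := by
  subst hj
  have hterm : ∀ π : Equiv.Perm (Fin n),
      minorDet (π.permMatrix K) S T * minorDet ((π⁻¹).permMatrix K) U V =
      if S.image π = T ∧ V.image π = U then invS K π S * invS K π V else 0 := by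
    intro π
    rw [minorDet_perm π S T hS hT, minorDet_perm_inv π U V hU hV, ite_and]
    split_ifs <;> simp
  simp_rw [hterm]
  split_ifs with h
  · rw [← Finset.sum_filter, ← count_perm S T U V hS hT hU hV h.1 h.2, ← nsmul_eq_mul,
      ← Finset.sum_const]
    refine Finset.sum_congr rfl fun π hπ => ?_
    have hπ' := (Finset.mem_filter.mp hπ).2
    exact term_sign S T U V hS hT hU hV h.1 h.2 π hπ'.1 hπ'.2
  · by_cases hc : (S ∩ V).card = (T ∩ U).card
    · have a1 := Finset.card_sdiff_add_card_inter S V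
      have h2 : ¬ k - 1 ≤ (S ∩ V).card := fun h' => h ⟨hc, h'⟩
      obtain ⟨a, ha, b, hb, hab⟩ := Finset.one_lt_card.mp (show 1 < (S \ V).card by omega)
      rw [Finset.mem_sdiff] at ha hb
      refine Finset.sum_involution (fun π _ => π * Equiv.swap a b) ?_ ?_ ?_ ?_
      · intro π _
        have hfix : ∀ x ∈ V, (π * Equiv.swap a b) x = π x := by
          intro x hx
          rw [Equiv.Perm.mul_apply, Equiv.swap_apply_of_ne_of_ne]
          · rintro rfl; exact ha.2 hx
          · rintro rfl; exact hb.2 hx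
        have m1 : V.image (π * Equiv.swap a b) = V.image π := Finset.image_congr hfix
        have m2 : S.image (π * Equiv.swap a b) = S.image π := by
          have : S.image (Equiv.swap a b) = S := by
            rw [image_iff]
            intro x
            rw [Equiv.swap_apply_def]
            split_ifs with h1 h2
            · subst h1; simp [ha.1, hb.1]
            · subst h2; simp [ha.1, hb.1]
            · rfl
          rw [Equiv.Perm.coe_mul, ← Finset.image_image, this]
        rw [m1, m2, invS_swap π S a b ha.1 hb.1 hab, invS_congr _ π V hfix]
        split_ifs <;> ring
      · intro π _ _ he
        apply hab
        have : (π * Equiv.swap a b) b = π b := by rw [he]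
        simpa using this
      · intro π _; exact Finset.mem_univ _
      · intro π _; simp [mul_assoc]
    · refine Finset.sum_eq_zero fun π _ => ?_
      rw [if_neg]
      rintro ⟨h1, h2⟩
      apply hc
      rw [← h1, ← h2, ← Finset.image_inter _ _ π.injective,
        Finset.card_image_of_injective _ π.injective]
end

section
/- Let K be a commutative ring, n and k natural numbers with k ≤ n, and let S, T, U, V be subsets of {1,…,n} each of size k. If |S ∩ V| = |T ∩ U| and |S ∩ V| ≤ k−2 (equivalently, |S ∖ (S ∩ V)| ≥ 2), then ∑_{P ∈ 𝒫_n} [P]_{S,T}·[P^{-1}]_{U,V} = 0. -/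
theorem minorDet_swap_rows {K : Type} [CommRing K] {n : ℕ} (A : Matrix (Fin n) (Fin n) K)
    (S T : Finset (Fin n)) {a b : Fin n} (ha : a ∈ S) (hb : b ∈ S) (hab : a ≠ b) :
    minorDet (A.submatrix (Equiv.swap a b) id) S T = - minorDet A S T := by
  unfold minorDet
  split_ifs with h
  · have hr := Finset.range_orderEmbOfFin S rfl
    obtain ⟨i, hi⟩ : a ∈ Set.range (S.orderEmbOfFin rfl) := by rw [hr]; exact ha
    obtain ⟨j, hj⟩ : b ∈ Set.range (S.orderEmbOfFin rfl) := by rw [hr]; exact hb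
    have hij : i ≠ j := by rintro rfl; exact hab (hi.symm.trans hj)
    have key : (A.submatrix (Equiv.swap a b) id).submatrix (S.orderEmbOfFin rfl)
        (T.orderEmbOfFin h) =
        (A.submatrix (S.orderEmbOfFin rfl) (T.orderEmbOfFin h)).submatrix (Equiv.swap i j) id := by
      ext x y
      simp only [Matrix.submatrix_apply, id]
      rw [(S.orderEmbOfFin rfl).injective.map_swap, hi, hj]
    rw [key, Matrix.det_permute, Equiv.Perm.sign_swap hij]
    simp
  · simp

theorem minorDet_swap_cols {K : Type} [CommRing K] {n : ℕ} (A : Matrix (Fin n) (Fin n) K)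
    (U V : Finset (Fin n)) {a b : Fin n} (ha : a ∉ V) (hb : b ∉ V) :
    minorDet (A.submatrix id (Equiv.swap a b)) U V = minorDet A U V := by
  unfold minorDet
  split_ifs with h
  · congr 1
    ext x y
    simp only [Matrix.submatrix_apply, id]
    have hm := Finset.orderEmbOfFin_mem V h y
    rw [Equiv.swap_apply_of_ne_of_ne]
    · intro e; exact ha (e ▸ hm)
    · intro e; exact hb (e ▸ hm)
  · rfl

theorem stmt_2 {K : Type} [CommRing K] (n k : ℕ) (hkn : k ≤ n)
    (S T U V : Finset (Fin n))
    (hS : S.card = k) (hT : T.card = k) (hU : U.card = k) (hV : V.card = k)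
    (hcard : (S ∩ V).card = (T ∩ U).card) (htwo : 2 ≤ (S \ V).card) :
    ∑ π : Equiv.Perm (Fin n),
        minorDet (π.permMatrix K) S T * minorDet ((π⁻¹).permMatrix K) U V = 0 := by
  obtain ⟨a, ha, b, hb, hab⟩ := Finset.one_lt_card.1 htwo
  rw [Finset.mem_sdiff] at ha hb
  refine Finset.sum_involution (fun π _ => π * Equiv.swap a b) ?_ ?_ ?_ ?_
  · intro π _
    have h1 : (π * Equiv.swap a b).permMatrix K
        = (π.permMatrix K).submatrix (Equiv.swap a b) id := by
      ext i j
      simp [Equiv.Perm.permMatrix, PEquiv.toMatrix_apply]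
    have h2 : ((π * Equiv.swap a b)⁻¹).permMatrix K
        = ((π⁻¹).permMatrix K).submatrix id (Equiv.swap a b) := by
      ext i j
      have : Equiv.swap a b (π⁻¹ i) = j ↔ π⁻¹ i = Equiv.swap a b j := by
        rw [← Equiv.eq_symm_apply, Equiv.symm_swap]
      simp only [mul_inv_rev, Equiv.swap_inv, Equiv.Perm.permMatrix, PEquiv.toMatrix_apply,
        Matrix.submatrix_apply, id, Equiv.toPEquiv_apply, Option.mem_some_iff, Equiv.Perm.mul_apply,
        this]
    rw [h1, h2, minorDet_swap_rows _ S T ha.1 hb.1 hab, minorDet_swap_cols _ U V ha.2 hb.2]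
    ring
  · intro π _ _ h
    exact hab (Equiv.swap_eq_one_iff.1 (mul_eq_left.1 h))
  · intro π _; exact Finset.mem_univ _
  · intro π _
    simp [mul_assoc]
end

section
/- Let K be a commutative ring, n and k natural numbers with k ≤ n, and let S, T, U, V be subsets of {1,…,n} each of size k with |S ∩ V| = |T ∩ U| = k−1. Let π be a permutation of {1,…,n} with π(S) = T and π(V) = U, and let P_π be its permutation matrix over K. Then [P_π]_{S,T}·[P_π^{-1}]_{U,V} = (−1)^{s(T,U)+s(S,V)}, where −1 is the negation of the multiplicative identity of K. -/
def epsF {n : ℕ} (π : Equiv.Perm (Fin n)) (x y : Fin n) : ℤˣ :=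
  if x < y ∧ π y < π x then -1 else 1

def epsP {n : ℕ} (π : Equiv.Perm (Fin n)) (S : Finset (Fin n)) : ℤˣ :=
  ∏ y ∈ S, ∏ x ∈ S, epsF π x y

theorem minor_eps {K : Type} [CommRing K] {n : ℕ} (π : Equiv.Perm (Fin n))
    (S T : Finset (Fin n)) (h : S.image π = T) :
    minorDet (π.permMatrix K) S T = ((epsP π S : ℤˣ) : ℤ) := by
  have hc : T.card = S.card := by rw [← h, Finset.card_image_of_injective _ π.injective]
  have hm : ∀ a, a ∈ S ↔ π a ∈ T := by
    intro a; rw [← h]; simp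
  let σ : Equiv.Perm (Fin S.card) := (S.orderIsoOfFin rfl).toEquiv.trans
    ((π.subtypeEquiv (p := (· ∈ S)) (q := (· ∈ T)) hm).trans (T.orderIsoOfFin hc).symm.toEquiv)
  have hσ : ∀ i, T.orderEmbOfFin hc (σ i) = π (S.orderEmbOfFin rfl i) := by
    intro i
    rw [← Finset.coe_orderIsoOfFin_apply]
    simp [σ]
  have hM : (π.permMatrix K).submatrix (S.orderEmbOfFin rfl) (T.orderEmbOfFin hc)
      = σ.permMatrix K := by
    ext i j
    simp only [Matrix.submatrix_apply, Equiv.Perm.permMatrix, PEquiv.toMatrix_apply,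
      Equiv.toPEquiv_apply, Option.mem_some_iff, ← hσ, EmbeddingLike.apply_eq_iff_eq]
  have hprod : ∀ f : Fin n → ℤˣ, ∏ x ∈ S, f x = ∏ i, f (S.orderEmbOfFin rfl i) := by
    intro f
    conv_lhs => rw [← Finset.image_orderEmbOfFin_univ S rfl]
    rw [Finset.prod_image (by intro a _ b _ hab; simpa using hab)]
  have hs : Equiv.Perm.sign σ = epsP π S := by
    rw [Equiv.Perm.sign_eq_prod_prod_Iio]
    unfold epsP
    rw [hprod]
    refine Finset.prod_congr rfl fun j _ => ?_
    rw [hprod]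
    symm
    rw [← Finset.prod_subset (Finset.subset_univ (Finset.Iio j))]
    · refine Finset.prod_congr rfl fun i hi => ?_
      have hij : i < j := by simpa using hi
      unfold epsF
      rw [← hσ, ← hσ]
      simp only [OrderEmbedding.lt_iff_lt, hij, true_and]
      have : σ i ≠ σ j := by simpa using hij.ne
      split_ifs <;> first | rfl | omega
    · intro i _ hi
      have hij : ¬ i < j := by simpa using hi
      simp [epsF, hij]
  unfold minorDet
  rw [dif_pos hc, hM, Matrix.det_permutation, hs]

theorem eps_inv {n : ℕ} (π : Equiv.Perm (Fin n)) (V : Finset (Fin n)) :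
    epsP π⁻¹ (V.image π) = epsP π V := by
  unfold epsP
  rw [Finset.prod_image π.injective.injOn]
  simp only [Finset.prod_image π.injective.injOn]
  rw [Finset.prod_comm]
  refine Finset.prod_congr rfl fun y _ => Finset.prod_congr rfl fun x _ => ?_
  simp [epsF, and_comm]

theorem rless_prod {n : ℕ} (a : Fin n) (W : Finset (Fin n)) :
    (-1 : ℤˣ) ^ (rless a (insert a W)) = ∏ x ∈ W, (if x < a then -1 else 1) := by
  rw [Finset.prod_ite]
  simp [rless, Finset.filter_insert]

theorem eps_insert {n : ℕ} (π : Equiv.Perm (Fin n)) (W : Finset (Fin n)) (a : Fin n)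
    (ha : a ∉ W) :
    epsP π (insert a W) = epsP π W * ((-1) ^ (rless a (insert a W)) *
      (-1) ^ (rless (π a) ((insert a W).image π))) := by
  rw [Finset.image_insert, rless_prod, rless_prod, Finset.prod_image π.injective.injOn]
  unfold epsP
  rw [Finset.prod_insert ha, Finset.prod_insert ha]
  simp only [Finset.prod_insert ha]
  rw [Finset.prod_mul_distrib]
  have h1 : epsF π a a = 1 := by simp [epsF]
  rw [h1, one_mul, ← mul_assoc, mul_comm]
  congr 1
  rw [← Finset.prod_mul_distrib]
  refine Eq.trans ?_ (Finset.prod_mul_distrib (s := W))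
  refine Finset.prod_congr rfl fun x hx => ?_
  have hxa : x ≠ a := fun h => ha (h ▸ hx)
  have hpa : π x ≠ π a := fun h => hxa (π.injective h)
  unfold epsF
  rcases lt_or_gt_of_ne hxa with h | h <;> rcases lt_or_gt_of_ne hpa with h' | h' <;>
    simp [h, h', h.not_gt, h'.not_gt]

theorem stmt_4 {K : Type} [CommRing K] (n k : ℕ) (hkn : k ≤ n)
    (S T U V : Finset (Fin n))
    (hS : S.card = k) (hT : T.card = k) (hU : U.card = k) (hV : V.card = k)
    (hSV : (S ∩ V).card = k - 1) (hTU : (T ∩ U).card = k - 1)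
    (π : Equiv.Perm (Fin n)) (hπS : S.image π = T) (hπV : V.image π = U) :
    minorDet (π.permMatrix K) S T * minorDet ((π⁻¹).permMatrix K) U V =
      (((-1 : Kˣ) ^ (sSign T U + sSign S V) : Kˣ) : K) := by
  have hUV : U.image (π⁻¹ : Equiv.Perm (Fin n)) = V := by
    rw [← hπV, Finset.image_image]; simp
  rw [minor_eps π S T hπS, minor_eps π⁻¹ U V hUV]
  have key : epsP π S * epsP π⁻¹ U = (-1 : ℤˣ) ^ (sSign T U + sSign S V) := by
    rw [← hπV, eps_inv]
    rcases Nat.eq_zero_or_pos k with hk | hk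
    · subst hk
      rw [Finset.card_eq_zero] at hS hT hU hV
      subst hS hV
      subst hπS
      simp [epsP, sSign]
    · have c1 : (S \ V).card = 1 := by
        have := Finset.card_sdiff_add_card_inter S V; omega
      have c2 : (V \ S).card = 1 := by
        have := Finset.card_sdiff_add_card_inter V S
        rw [Finset.inter_comm] at this; omega
      obtain ⟨a, ha⟩ := Finset.card_eq_one.1 c1
      obtain ⟨b, hb⟩ := Finset.card_eq_one.1 c2
      have hSa : S = insert a (S ∩ V) := by
        rw [Finset.insert_eq, ← ha, Finset.sdiff_union_inter]
      have hVb : V = insert b (S ∩ V) := by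
        rw [Finset.insert_eq, ← hb, Finset.inter_comm, Finset.sdiff_union_inter]
      have haW : a ∉ S ∩ V := by
        have : a ∈ S \ V := by simp [ha]
        simp at this ⊢; tauto
      have hbW : b ∉ S ∩ V := by
        have : b ∈ V \ S := by simp [hb]
        simp at this ⊢; tauto
      have e1 := eps_insert π (S ∩ V) a haW
      have e2 := eps_insert π (S ∩ V) b hbW
      rw [← hSa] at e1
      rw [← hVb] at e2
      have d1 : T \ V.image π = {π a} := by
        rw [← hπS, ← Finset.image_sdiff _ _ π.injective, ha, Finset.image_singleton]
      have d2 : V.image π \ T = {π b} := by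
        rw [← hπS, ← Finset.image_sdiff _ _ π.injective, hb, Finset.image_singleton]
      unfold sSign
      rw [d1, d2, ha, hb, e1, e2, hπS]
      simp only [Finset.sum_singleton, zpow_add, zpow_sub, zpow_natCast]
      have hi : ∀ u : ℤˣ, u⁻¹ = u := Int.units_inv_eq_self
      simp only [hi]
      have hW : epsP π (S ∩ V) * epsP π (S ∩ V) = 1 := Int.units_mul_self _
      generalize epsP π (S ∩ V) = w at *
      calc _ = (w * w) * _ := by rw [mul_mul_mul_comm]
        _ = _ := by rw [hW, one_mul]; ac_rfl
  have hmap : ((-1 : Kˣ) ^ (sSign T U + sSign S V)) =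
      Units.map (Int.castRingHom K : ℤ →* K) (epsP π S * epsP π⁻¹ U) := by
    rw [key, map_zpow]
    congr 1
    ext; simp
  rw [hmap]
  simp
end

section
/- Let K be a commutative ring, d ≥ 1, and for j = 0,…,d−1 let n_j be a natural number. For each j, let S_{1,j}, T_{1,j} be subsets of {1,…,n_j} of equal size, and let S_{2,j}, T_{2,j} be subsets of {1,…,n_{j+1 mod d}} of equal size. Then ∑_{Q_0 ∈ 𝒬_{n_0}} ⋯ ∑_{Q_{d−1} ∈ 𝒬_{n_{d−1}}} ∏_{j=0}^{d−1} [Q_j]_{S_{1,j},T_{1,j}}·[Q_{j+1 mod d}]_{S_{2,j},T_{2,j}} equals (1+1)^{n_0+⋯+n_{d−1}} (computed in K) if S_{1,j} = T_{1,j} = S_{2,j−1 mod d} = T_{2,j−1 mod d} for every j = 0,…,d−1, and equals 0 otherwise. -/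
/-- The sign matrix (diagonal matrix with entries `±1`) determined by a choice of signs `ε`. -/
def signMatrix {m : ℕ} (K : Type) [CommRing K] (ε : Fin m → Bool) : Matrix (Fin m) (Fin m) K :=
  Matrix.diagonal (fun i => if ε i then 1 else -1)

theorem aux_minor {K : Type} [CommRing K] {m : ℕ} (ε : Fin m → Bool) (S T : Finset (Fin m))
    (h : S.card = T.card) :
    minorDet (signMatrix K ε) S T =
      if S = T then ∏ i, (if i ∈ S then (if ε i then (1 : K) else -1) else 1) else 0 := by
  unfold minorDet signMatrix
  rw [dif_pos h.symm]
  split_ifs with hST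
  · subst hST
    rw [Matrix.submatrix_diagonal _ _ (S.orderEmbOfFin rfl).injective, Matrix.det_diagonal]
    rw [Finset.prod_ite_mem, Finset.univ_inter]
    rw [← Finset.prod_coe_sort S, ← (S.orderIsoOfFin rfl).toEquiv.prod_comp]
    rfl
  · have : ∃ i ∈ S, i ∉ T := by
      by_contra! hc
      exact hST (Finset.eq_of_subset_of_card_le hc h.ge)
    obtain ⟨i, hi, hiT⟩ := this
    have hr : i ∈ Set.range (S.orderEmbOfFin rfl) := by
      rw [Finset.range_orderEmbOfFin]; exact hi
    obtain ⟨k, rfl⟩ := hr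
    apply Matrix.det_eq_zero_of_row_eq_zero k
    intro l
    rw [Matrix.submatrix_apply, Matrix.diagonal_apply_ne]
    intro he
    apply hiT
    rw [he]
    exact Finset.orderEmbOfFin_mem _ _ _

theorem aux_sum {K : Type} [CommRing K] {m : ℕ} (S T S' T' : Finset (Fin m))
    (h : S.card = T.card) (h' : S'.card = T'.card) :
    ∑ ε : Fin m → Bool, minorDet (signMatrix K ε) S T * minorDet (signMatrix K ε) S' T' =
      if S = T ∧ S' = T' ∧ S' = S then (1 + 1 : K) ^ m else 0 := by
  simp only [aux_minor _ _ _ h, aux_minor _ _ _ h']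
  by_cases hA : S = T
  swap
  · simp [hA]
  by_cases hB : S' = T'
  swap
  · simp [hB]
  simp only [hA, hB, if_true, true_and, ← Finset.prod_mul_distrib]
  rw [← Fintype.prod_sum (fun (i : Fin m) (b : Bool) =>
    (if i ∈ T then (if b then (1 : K) else -1) else 1) *
      (if i ∈ T' then (if b then (1 : K) else -1) else 1))]
  split_ifs with hC
  · subst hC
    rw [Finset.prod_congr rfl (g := fun _ => (1 + 1 : K))]
    · simp
    · intro i _
      by_cases hi : i ∈ T' <;> simp [hi, one_add_one_eq_two]
  · have : ∃ i, ¬ (i ∈ T' ↔ i ∈ T) := by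
      by_contra! hc
      exact hC (Finset.ext hc)
    obtain ⟨i, hi⟩ := this
    apply Finset.prod_eq_zero (Finset.mem_univ i)
    by_cases ha : i ∈ T <;> by_cases hb : i ∈ T' <;> simp_all

theorem stmt_5 {K : Type} [CommRing K] (d : ℕ) [NeZero d] (n : Fin d → ℕ)
    (S1 T1 : ∀ j : Fin d, Finset (Fin (n j)))
    (S2 T2 : ∀ j : Fin d, Finset (Fin (n (j + 1))))
    (h1 : ∀ j, (S1 j).card = (T1 j).card) (h2 : ∀ j, (S2 j).card = (T2 j).card) :
    ∑ ε : (∀ j : Fin d, Fin (n j) → Bool),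
        ∏ j : Fin d,
          minorDet (signMatrix K (ε j)) (S1 j) (T1 j) *
            minorDet (signMatrix K (ε (j + 1))) (S2 j) (T2 j) =
      if ∀ j : Fin d, S1 (j + 1) = T1 (j + 1) ∧ S2 j = T2 j ∧ S2 j = S1 (j + 1) then
        ((1 + 1 : K) ^ (∑ j : Fin d, n j))
      else 0 := by
  have key : ∀ ε : (∀ j : Fin d, Fin (n j) → Bool),
      ∏ j : Fin d, minorDet (signMatrix K (ε j)) (S1 j) (T1 j) *
            minorDet (signMatrix K (ε (j + 1))) (S2 j) (T2 j) =
      ∏ j : Fin d, minorDet (signMatrix K (ε (j + 1))) (S1 (j + 1)) (T1 (j + 1)) *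
            minorDet (signMatrix K (ε (j + 1))) (S2 j) (T2 j) := by
    intro ε
    rw [Finset.prod_mul_distrib, Finset.prod_mul_distrib]
    congr 1
    exact (Equiv.prod_comp (Equiv.addRight (1 : Fin d))
      (fun j => minorDet (signMatrix K (ε j)) (S1 j) (T1 j))).symm
  rw [Finset.sum_congr rfl (fun ε _ => key ε)]
  let e : (∀ j : Fin d, Fin (n (j + 1)) → Bool) ≃ (∀ j : Fin d, Fin (n j) → Bool) :=
    Equiv.piCongrLeft (fun j => Fin (n j) → Bool) (Equiv.addRight (1 : Fin d))
  rw [← e.sum_comp]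
  have he : ∀ ε j, e ε (j + 1) = ε j := fun ε j =>
    Equiv.piCongrLeft_apply_apply (fun j => Fin (n j) → Bool) (Equiv.addRight (1 : Fin d)) ε j
  simp only [he]
  rw [← Fintype.prod_sum (fun (j : Fin d) (x : Fin (n (j + 1)) → Bool) =>
    minorDet (signMatrix K x) (S1 (j + 1)) (T1 (j + 1)) *
            minorDet (signMatrix K x) (S2 j) (T2 j))]
  simp only [aux_sum _ _ _ _ (h1 _) (h2 _)]
  have hn : ∑ j : Fin d, n j = ∑ j : Fin d, n (j + 1) :=
    (Equiv.sum_comp (Equiv.addRight (1 : Fin d)) n).symm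
  split_ifs with hC
  · rw [hn, ← Finset.prod_pow_eq_pow_sum]
    exact Finset.prod_congr rfl (fun j _ => if_pos (hC j))
  · rw [not_forall] at hC
    obtain ⟨j, hj⟩ := hC
    exact Finset.prod_eq_zero (Finset.mem_univ j) (if_neg hj)
end

section
/- Let K be a commutative ring, d ≥ 1, and for j = 0,…,d−1 let n_j be a natural number and A_j ∈ K^{n_j × n_{j+1 mod d}}. Let k be a natural number with k ≤ n_j for all j, and for each j let S_j be a subset of {1,…,n_j} of size k. Then ∑_{P_0 ∈ 𝒫_{n_0}} ⋯ ∑_{P_{d−1} ∈ 𝒫_{n_{d−1}}} ∏_{j=0}^{d−1} [P_j A_j P_{j+1 mod d}^{-1}]_{S_j, S_{j+1 mod d}} = (∏_{j=0}^{d−1} k!·(n_j−k)!) · [A_0 A_1 ⋯ A_{d−1}]^{(k)}, where the factorials are cast into K. -/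
open scoped Fin.CommRing

/-- Reindex the rows of a matrix along an equality of dimensions. -/
def rowCast {K : Type} [CommRing K] {a b p : ℕ} (h : a = b) (M : Matrix (Fin a) (Fin p) K) :
    Matrix (Fin b) (Fin p) K :=
  M.submatrix (Fin.cast h.symm) id

/-- Reindex the columns of a matrix along an equality of dimensions. -/
def colCast {K : Type} [CommRing K] {m a b : ℕ} (h : a = b) (M : Matrix (Fin m) (Fin a) K) :
    Matrix (Fin m) (Fin b) K :=
  M.submatrix id (Fin.cast h.symm)

/-- Partial products `A_0 * A_1 * ⋯ * A_{m-1}` of a cyclic family of matrices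
`A j : Matrix (Fin (n j)) (Fin (n (j+1))) K` for `j : Fin d`. -/
def cycProdAux {K : Type} [CommRing K] {d : ℕ} [NeZero d] {n : Fin d → ℕ}
    (A : ∀ j : Fin d, Matrix (Fin (n j)) (Fin (n (j + 1))) K) :
    (m : ℕ) → Matrix (Fin (n 0)) (Fin (n (m : Fin d))) K
  | 0 => colCast (congrArg n (by simp)) (1 : Matrix (Fin (n 0)) (Fin (n 0)) K)
  | m + 1 => colCast (congrArg n (by push_cast; ring))
      (cycProdAux A m * A ((m : ℕ) : Fin d))

/-- The cyclic product `A_0 * A_1 * ⋯ * A_{d-1}`, an `n 0 × n 0` matrix. -/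
def cycProd {K : Type} [CommRing K] {d : ℕ} [NeZero d] {n : Fin d → ℕ}
    (A : ∀ j : Fin d, Matrix (Fin (n j)) (Fin (n (j + 1))) K) :
    Matrix (Fin (n 0)) (Fin (n 0)) K :=
  colCast (congrArg n (by simp)) (cycProdAux A d)

/-- `[A]^{(k)}`: the sum of all principal `k × k` minors of `A`. -/
def minorSum {K : Type} [CommRing K] {m : ℕ} (A : Matrix (Fin m) (Fin m) K) (k : ℕ) : K :=
  ∑ S ∈ Finset.powersetCard k (Finset.univ : Finset (Fin m)), minorDet A S S

/-- minors along arbitrary index functions -/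
def cDet {K : Type} [CommRing K] {m p : Type} {k : ℕ} (A : Matrix m p K)
    (f : Fin k → m) (g : Fin k → p) : K := (A.submatrix f g).det

theorem cDet_row_perm {K : Type} [CommRing K] {m p : Type} {k : ℕ} (A : Matrix m p K)
    (f : Fin k → m) (g : Fin k → p) (σ : Equiv.Perm (Fin k)) :
    cDet A (f ∘ σ) g = ((Equiv.Perm.sign σ : ℤ) : K) * cDet A f g := by
  unfold cDet
  rw [← Matrix.det_permute]
  rfl

theorem cDet_col_perm {K : Type} [CommRing K] {m p : Type} {k : ℕ} (A : Matrix m p K)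
    (f : Fin k → m) (g : Fin k → p) (σ : Equiv.Perm (Fin k)) :
    cDet A f (g ∘ σ) = ((Equiv.Perm.sign σ : ℤ) : K) * cDet A f g := by
  unfold cDet
  rw [← Matrix.det_permute']
  rfl

theorem cDet_row_zero {K : Type} [CommRing K] {m p : Type} {k : ℕ} (A : Matrix m p K)
    (f : Fin k → m) (g : Fin k → p) (hf : ¬ Function.Injective f) : cDet A f g = 0 := by
  unfold cDet
  simp only [Function.Injective, not_forall] at hf
  obtain ⟨i, j, hij, hne⟩ := hf
  apply Matrix.det_zero_of_row_eq hne
  ext x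
  simp [hij]

theorem cDet_mul {K : Type} [CommRing K] {m p q : Type} [Fintype p] [DecidableEq p] {k : ℕ}
    (A : Matrix m p K) (B : Matrix p q K) (f : Fin k → m) (h : Fin k → q) :
    cDet (A * B) f h = ∑ g : Fin k → p, cDet A f g * ∏ i, B (g i) (h i) := by
  unfold cDet
  simp only [Matrix.det_apply', Matrix.submatrix_apply, Matrix.mul_apply, Finset.prod_univ_sum,
    Fintype.piFinset_univ, Finset.mul_sum, Finset.sum_mul, Finset.prod_mul_distrib]
  rw [Finset.sum_comm]
  simp only [mul_assoc]

theorem cDet_cauchy {K : Type} [CommRing K] {m p q : Type} [Fintype p] [DecidableEq p] {k : ℕ}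
    (A : Matrix m p K) (B : Matrix p q K) (f : Fin k → m) (h : Fin k → q) :
    ∑ g : Fin k → p, cDet A f g * cDet B g h = (k.factorial : K) * cDet (A * B) f h := by
  have h1 : ∀ g : Fin k → p, cDet A f g * cDet B g h =
      ∑ τ : Equiv.Perm (Fin k), cDet A f (g ∘ τ) * ∏ i, B ((g ∘ τ) i) (h i) := by
    intro g
    simp only [cDet_col_perm]
    conv_lhs => rw [cDet.eq_def B, Matrix.det_apply']
    rw [Finset.mul_sum]
    refine Finset.sum_congr rfl fun τ _ => ?_
    simp only [Matrix.submatrix_apply, Function.comp]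
    ring
  simp only [h1]
  rw [Finset.sum_comm]
  have h2 : ∀ τ : Equiv.Perm (Fin k),
      ∑ g : Fin k → p, cDet A f (g ∘ τ) * ∏ i, B ((g ∘ τ) i) (h i) = cDet (A * B) f h := by
    intro τ
    rw [cDet_mul]
    exact Fintype.sum_equiv (Equiv.arrowCongr τ.symm (Equiv.refl p)) _ _ (fun g => rfl)
  rw [Finset.sum_congr rfl fun τ _ => h2 τ]
  simp [Fintype.card_perm]

theorem cDet_principal {K : Type} [CommRing K] {m : ℕ} (k : ℕ) (M : Matrix (Fin m) (Fin m) K) :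
    ∑ f : Fin k → Fin m, cDet M f f = (k.factorial : K) * minorSum M k := by
  classical
  have h0 : ∑ f : Fin k → Fin m, cDet M f f =
      ∑ f : Fin k → Fin m with Function.Injective f, cDet M f f := by
    symm
    apply Finset.sum_subset (Finset.subset_univ _)
    intro f _ hf
    apply cDet_row_zero
    simpa using hf
  rw [h0, minorSum, Finset.mul_sum,
    ← Finset.sum_fiberwise_of_maps_to (g := fun f : Fin k → Fin m => Finset.univ.image f)
      (t := Finset.powersetCard k Finset.univ)]
  · refine Finset.sum_congr rfl fun S hS => ?_
    have hc : S.card = k := (Finset.mem_powersetCard.1 hS).2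
    have hm : minorDet M S S = cDet M (S.orderEmbOfFin hc) (S.orderEmbOfFin hc) := by
      subst hc
      simp [minorDet, cDet]
    have : (k.factorial : K) * minorDet M S S =
        ∑ σ : Equiv.Perm (Fin k), cDet M (S.orderEmbOfFin hc ∘ σ) (S.orderEmbOfFin hc ∘ σ) := by
      simp only [cDet_row_perm, cDet_col_perm, ← mul_assoc, ← Int.cast_mul]
      simp [Fintype.card_perm, hm, ← Units.val_mul]
    rw [this]
    symm
    refine Finset.sum_bij (fun σ _ => S.orderEmbOfFin hc ∘ σ) ?_ ?_ ?_ ?_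
    · intro σ _
      simp only [Finset.mem_filter, Finset.mem_univ, true_and]
      refine ⟨(S.orderEmbOfFin hc).injective.comp σ.injective, ?_⟩
      rw [← Finset.image_image, Finset.image_univ_equiv, Finset.image_orderEmbOfFin_univ]
    · intro σ _ τ _ h
      ext i
      have := congrFun h i
      simpa [Fin.ext_iff] using this
    · intro f hf
      simp only [Finset.mem_filter, Finset.mem_univ, true_and] at hf
      obtain ⟨hf, hfS⟩ := hf
      have hmem : ∀ i, f i ∈ S := fun i => by rw [← hfS]; simp
      let σ : Fin k → Fin k := fun i => (S.orderIsoOfFin hc).symm ⟨f i, hmem i⟩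
      have hσ : Function.Injective σ := by
        intro i j hij
        apply hf
        simpa [σ] using hij
      refine ⟨Equiv.ofBijective σ (Finite.injective_iff_bijective.1 hσ), Finset.mem_univ _, ?_⟩
      ext i
      simp [σ, ← Finset.coe_orderIsoOfFin_apply]
    · intro σ _
      rfl
  · intro f hf
    simp only [Finset.mem_filter, Finset.mem_univ, true_and] at hf
    simp [Finset.mem_powersetCard, Finset.card_image_of_injective _ hf]

theorem card_perm_comp {n k : ℕ} (s f : Fin k → Fin n) (hs : Function.Injective s)
    (hf : Function.Injective f) :
    Fintype.card {π : Equiv.Perm (Fin n) // π ∘ s = f} = (n - k).factorial := by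
  classical
  obtain ⟨π₀, h₀⟩ : ∃ π : Equiv.Perm (Fin n), π ∘ s = f := by
    let e : {x // x ∈ Set.range s} ≃ {x // x ∈ Set.range f} :=
      (Equiv.ofInjective s hs).symm.trans (Equiv.ofInjective f hf)
    refine ⟨e.extendSubtype, ?_⟩
    ext i
    simp only [Function.comp]
    rw [Equiv.extendSubtype_apply_of_mem _ _ ⟨i, rfl⟩]
    simp only [e, Equiv.trans_apply]
    have : (Equiv.ofInjective s hs).symm ⟨s i, ⟨i, rfl⟩⟩ = i := by
      simp
    rw [this]
    rfl
  have e1 : {π : Equiv.Perm (Fin n) // π ∘ s = f} ≃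
      {π : Equiv.Perm (Fin n) // ∀ a, ¬ (a ∉ Set.range s) → π a = a} := by
    refine (Equiv.mulLeft π₀⁻¹).subtypeEquiv ?_
    intro π
    subst h₀
    constructor
    · intro h a ha
      simp only [not_not] at ha
      obtain ⟨i, rfl⟩ := ha
      have := congrFun h i
      simp only [Function.comp] at this
      simp [this]
    · intro h
      ext i
      have := h (s i) (by simp)
      simp only [Equiv.coe_mulLeft, Equiv.Perm.mul_apply, Equiv.Perm.inv_eq_iff_eq] at this
      simp [this]
  rw [Fintype.card_congr (e1.trans (Equiv.Perm.subtypeEquivSubtypePerm _).symm),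
    Fintype.card_perm]
  congr 1
  rw [Fintype.card_subtype_compl]
  have h3 : Fintype.card {x // x ∈ Set.range s} = k := by
    rw [← Fintype.card_congr (Equiv.ofInjective s hs), Fintype.card_fin]
  rw [h3, Fintype.card_fin]

theorem sum_perm_pi {K : Type} [CommRing K] {d k : ℕ} (n : Fin d → ℕ)
    (s : ∀ j, Fin k → Fin (n j)) (hs : ∀ j, Function.Injective (s j))
    (F : (∀ j, Fin k → Fin (n j)) → K)
    (hF : ∀ f, (∃ j, ¬ Function.Injective (f j)) → F f = 0) :
    ∑ π : (∀ j : Fin d, Equiv.Perm (Fin (n j))), F (fun j => π j ∘ s j) =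
      ((∏ j : Fin d, (n j - k).factorial : ℕ) : K) * ∑ f, F f := by
  classical
  rw [← Finset.sum_fiberwise (g := fun (π : ∀ j : Fin d, Equiv.Perm (Fin (n j))) =>
    (fun j => (π j ∘ s j : Fin k → Fin (n j)))), Finset.mul_sum]
  refine Finset.sum_congr rfl fun f _ => ?_
  have : ∀ π ∈ Finset.univ.filter (fun (π : ∀ j : Fin d, Equiv.Perm (Fin (n j))) =>
    (fun j => (π j ∘ s j : Fin k → Fin (n j))) = f), F (fun j => π j ∘ s j) = F f := by
    intro π hπ
    rw [(Finset.mem_filter.1 hπ).2]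
  rw [Finset.sum_congr rfl this, Finset.sum_const, nsmul_eq_mul]
  by_cases hf : ∃ j, ¬ Function.Injective (f j)
  · rw [hF f hf]; simp
  · push Not at hf
    congr 2
    rw [← Finset.prod_congr rfl (fun j _ => card_perm_comp (s j) (f j) (hs j) (hf j)),
      ← Fintype.card_pi, ← Fintype.card_subtype]
    apply Fintype.card_congr
    refine (Equiv.subtypeEquivRight ?_).trans (Equiv.subtypePiEquivPi (p := fun j (π : Equiv.Perm (Fin (n j))) => π ∘ s j = f j))
    intro π
    exact funext_iff

/-- partial products -/
def natProd {K : Type} [CommRing K] {X : Type} [Fintype X] [DecidableEq X]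
    (C : ℕ → Matrix X X K) : ℕ → Matrix X X K
  | 0 => 1
  | m + 1 => natProd C m * C m

theorem path_sum {K : Type} [CommRing K] {X : Type} [Fintype X] [DecidableEq X]
    (C : ℕ → Matrix X X K) (e : ℕ) (G : X → X → K) :
    ∑ f : Fin (e + 1) → X, (∏ j : Fin e, C j (f j.castSucc) (f j.succ)) * G (f 0) (f (Fin.last e))
      = ∑ a, ∑ b, natProd C e a b * G a b := by
  induction e generalizing G with
  | zero =>
    simp only [natProd, Matrix.one_apply]
    simp
    exact Fintype.sum_equiv (Equiv.funUnique (Fin 1) X) _ _ (fun f => rfl)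
  | succ e ih =>
    rw [← (Fin.snocEquiv (fun _ : Fin (e + 2) => X)).sum_comp, Fintype.sum_prod_type]
    rw [Finset.sum_comm]
    have := ih (fun a c => ∑ b, C e c b * G a b)
    simp only [natProd, Matrix.mul_apply, Finset.sum_mul]
    have h2 : ∀ a, ∑ b, ∑ c, natProd C e a c * C e c b * G a b
        = ∑ c, natProd C e a c * ∑ b, C e c b * G a b := by
      intro a
      rw [Finset.sum_comm]
      simp only [Finset.mul_sum, mul_assoc]
    simp only [h2, ← this]
    refine Finset.sum_congr rfl fun f _ => ?_
    rw [Finset.mul_sum]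
    refine Finset.sum_congr rfl fun b _ => ?_
    rw [Fin.prod_univ_castSucc]
    have h0 : (Fin.snoc f b : Fin (e + 2) → X) 0 = f 0 := by
      rw [← Fin.castSucc_zero, Fin.snoc_castSucc (α := fun _ => X)]
    simp only [Fin.snocEquiv, Equiv.coe_fn_mk, Fin.snoc_castSucc, Fin.succ_castSucc, Fin.succ_last, Fin.snoc_last, h0, Fin.val_castSucc, Fin.val_last]
    ring

theorem cyc_sum {K : Type} [CommRing K] {X : Type} [Fintype X] [DecidableEq X]
    (C : ℕ → Matrix X X K) (d : ℕ) [NeZero d] :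
    ∑ f : Fin d → X, ∏ j : Fin d, C j (f j) (f (j + 1)) = ∑ a, natProd C d a a := by
  obtain ⟨e, rfl⟩ : ∃ e, d = e + 1 := ⟨d - 1, by have := NeZero.pos d; omega⟩
  have := path_sum C e (fun a b => C e b a)
  simp only [natProd, Matrix.mul_apply]
  rw [← this]
  refine Finset.sum_congr rfl fun f _ => ?_
  rw [Fin.prod_univ_castSucc]
  simp

theorem natProd_cDet {K : Type} [CommRing K] {X : Type} [Fintype X] [DecidableEq X] (k : ℕ)
    (B : ℕ → Matrix X X K) (m : ℕ) (a b : Fin k → X) :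
    natProd (fun j => Matrix.of (cDet (k := k) (B j))) (m + 1) a b
      = (k.factorial : K) ^ m * cDet (natProd B (m + 1)) a b := by
  induction m generalizing b with
  | zero => simp [natProd]
  | succ m ih =>
    rw [natProd, Matrix.mul_apply]
    simp only [ih]
    simp only [mul_assoc, ← Finset.mul_sum, Matrix.of_apply]
    rw [cDet_cauchy]
    rw [pow_succ _ m, mul_assoc]
    rfl

/-- zero padding -/
def padM {K : Type} [CommRing K] {m p : ℕ} (N : ℕ) (A : Matrix (Fin m) (Fin p) K) :
    Matrix (Fin N) (Fin N) K :=
  Matrix.of fun x y => if h : x.1 < m ∧ y.1 < p then A ⟨x.1, h.1⟩ ⟨y.1, h.2⟩ else 0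

theorem padM_castLE {K : Type} [CommRing K] {m p N : ℕ} (A : Matrix (Fin m) (Fin p) K)
    (hm : m ≤ N) (hp : p ≤ N) (x : Fin m) (y : Fin p) :
    padM N A (Fin.castLE hm x) (Fin.castLE hp y) = A x y := by
  simp [padM]

theorem padM_row_zero {K : Type} [CommRing K] {m p N : ℕ} (A : Matrix (Fin m) (Fin p) K)
    (x : Fin N) (y : Fin N) (hx : ¬ x.1 < m) : padM N A x y = 0 := by
  simp [padM, hx]

theorem padM_col_zero {K : Type} [CommRing K] {m p N : ℕ} (A : Matrix (Fin m) (Fin p) K)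
    (x : Fin N) (y : Fin N) (hy : ¬ y.1 < p) : padM N A x y = 0 := by
  simp [padM, hy]

theorem cycProdAux_eq {K : Type} [CommRing K] {d : ℕ} [NeZero d] {n : Fin d → ℕ}
    (A : ∀ j : Fin d, Matrix (Fin (n j)) (Fin (n (j + 1))) K) (N : ℕ) (hN : ∀ j, n j ≤ N)
    (m : ℕ) (x : Fin (n 0)) (y : Fin (n (m : Fin d))) :
    cycProdAux A m x y = natProd (fun m => padM N (A (m : Fin d))) m
      (Fin.castLE (hN _) x) (Fin.castLE (hN _) y) := by
  induction m with
  | zero =>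
    simp [cycProdAux, natProd, colCast, Matrix.one_apply, Fin.ext_iff]
  | succ m ih =>
    simp only [cycProdAux, natProd, colCast, Matrix.submatrix_apply, id, Matrix.mul_apply]
    refine Finset.sum_of_injOn (Fin.castLE (hN _)) ?_ ?_ ?_ ?_
    · exact (Fin.castLE_injective _).injOn
    · intro z _; simp
    · intro z _ hz
      rw [padM_row_zero, mul_zero]
      intro h
      exact hz ⟨⟨z.1, h⟩, by simp, by ext; simp⟩
    · intro z _
      rw [ih, ← padM_castLE (A (m : Fin d)) (hN _) (hN _)]
      rfl

theorem cDet_row_zero' {K : Type} [CommRing K] {m p : Type} {k : ℕ} (A : Matrix m p K)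
    (f : Fin k → m) (g : Fin k → p) (i : Fin k) (h : ∀ y, A (f i) y = 0) : cDet A f g = 0 :=
  Matrix.det_eq_zero_of_row_eq_zero i (fun j => h (g j))

theorem natProd_row_zero {K : Type} [CommRing K] {X : Type} [Fintype X] [DecidableEq X]
    (C : ℕ → Matrix X X K) (x : X) (h : ∀ y, C 0 x y = 0) (m : ℕ) (y : X) :
    natProd C (m + 1) x y = 0 := by
  induction m generalizing y with
  | zero => simp [natProd, h]
  | succ m ih => rw [natProd, Matrix.mul_apply]; simp [ih]

theorem minorDet_perm_s6 {K : Type} [CommRing K] {m p k : ℕ} (A : Matrix (Fin m) (Fin p) K)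
    (π : Equiv.Perm (Fin m)) (σ : Equiv.Perm (Fin p)) (S : Finset (Fin m)) (T : Finset (Fin p))
    (hS : S.card = k) (hT : T.card = k) :
    minorDet (π.permMatrix K * A * (σ.permMatrix K)⁻¹) S T =
      cDet A (π ∘ S.orderEmbOfFin hS) (σ ∘ T.orderEmbOfFin hT) := by
  subst hS
  have hinv : (σ.permMatrix K)⁻¹ = (σ⁻¹).permMatrix K := by
    apply Matrix.inv_eq_left_inv
    rw [← Matrix.permMatrix_mul]
    simp
  rw [hinv, minorDet, dif_pos hT, cDet]
  congr 1
  ext i j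
  simp [Equiv.Perm.permMatrix, PEquiv.toMatrix_toPEquiv_mul, PEquiv.mul_toMatrix_toPEquiv]
  rfl

theorem main_sum {K : Type} [CommRing K] (d : ℕ) [NeZero d] (n : Fin d → ℕ)
    (A : ∀ j : Fin d, Matrix (Fin (n j)) (Fin (n (j + 1))) K) (k : ℕ) :
    ∑ f : (∀ j : Fin d, Fin k → Fin (n j)), ∏ j : Fin d, cDet (A j) (f j) (f (j + 1)) =
      ((∏ j : Fin d, k.factorial : ℕ) : K) * minorSum (cycProd A) k := by
  classical
  obtain ⟨N, hN⟩ : ∃ N, ∀ j, n j ≤ N :=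
    ⟨∑ j, n j, fun j => Finset.single_le_sum (fun _ _ => Nat.zero_le _) (Finset.mem_univ j)⟩
  let B : ℕ → Matrix (Fin N) (Fin N) K := fun m => padM N (A (m : Fin d))
  have hB : ∀ j : Fin d, B j = padM N (A j) := by
    intro j
    simp only [B]
    rw [Fin.cast_val_eq_self]
  have h1 : ∑ f : (∀ j : Fin d, Fin k → Fin (n j)), ∏ j : Fin d, cDet (A j) (f j) (f (j + 1)) =
      ∑ f : Fin d → Fin k → Fin N, ∏ j : Fin d, cDet (B j) (f j) (f (j + 1)) := by
    refine Finset.sum_of_injOn (fun f j i => Fin.castLE (hN j) (f j i)) ?_ ?_ ?_ ?_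
    · intro f _ g _ h
      funext j i
      exact Fin.castLE_injective _ (congrFun (congrFun h j) i)
    · intro f _; simp
    · intro f _ hf
      have : ∃ j i, ¬ (f j i).1 < n j := by
        by_contra! hc
        exact hf ⟨fun j i => ⟨(f j i).1, hc j i⟩, by simp, by funext j i; ext; simp⟩
      obtain ⟨j, i, hji⟩ := this
      apply Finset.prod_eq_zero (Finset.mem_univ j)
      apply cDet_row_zero' _ _ _ i
      intro y
      rw [hB, padM_row_zero _ _ _ hji]
    · intro f _
      refine Finset.prod_congr rfl fun j _ => ?_
      rw [hB]
      unfold cDet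
      congr 1
      ext a b
      simp [padM_castLE]
  have h2 : ∑ f : Fin k → Fin (n 0), cDet (cycProd A) f f =
      ∑ f : Fin k → Fin N, cDet (natProd B d) f f := by
    refine Finset.sum_of_injOn (fun f i => Fin.castLE (hN 0) (f i)) ?_ ?_ ?_ ?_
    · intro f _ g _ h
      funext i
      exact Fin.castLE_injective _ (congrFun h i)
    · intro f _; simp
    · intro f _ hf
      have : ∃ i, ¬ (f i).1 < n 0 := by
        by_contra! hc
        exact hf ⟨fun i => ⟨(f i).1, hc i⟩, by simp, by funext i; ext; simp⟩
      obtain ⟨i, hi⟩ := this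
      apply cDet_row_zero' _ _ _ i
      intro y
      obtain ⟨e, he⟩ : ∃ e, d = e + 1 := ⟨d - 1, by have := NeZero.pos d; omega⟩
      have := natProd_row_zero B (f i) (fun y => ?_) e y
      · rw [← he] at this; exact this
      · have h0 := hB 0
        rw [Fin.val_zero] at h0
        rw [h0, padM_row_zero _ _ _ hi]
    · intro f _
      unfold cDet
      congr 1
      ext a b
      simp only [Matrix.submatrix_apply, cycProd, colCast, id]
      rw [cycProdAux_eq A N hN]
      rfl
  have h3 := cyc_sum (fun j => Matrix.of (cDet (k := k) (B j))) d
  simp only [Matrix.of_apply] at h3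
  obtain ⟨e, he⟩ : ∃ e, d = e + 1 := ⟨d - 1, by have := NeZero.pos d; omega⟩
  have h4 : ∀ a, natProd (fun j => Matrix.of (cDet (k := k) (B j))) d a a
      = (k.factorial : K) ^ e * cDet (natProd B d) a a := by
    intro a
    rw [he]
    exact natProd_cDet k B e a a
  rw [h1, h3, Finset.sum_congr rfl fun a _ => h4 a, ← Finset.mul_sum, ← h2, cDet_principal,
    ← mul_assoc, ← pow_succ, ← he]
  simp
theorem stmt_6 {K : Type} [CommRing K] (d : ℕ) [NeZero d] (n : Fin d → ℕ)
    (A : ∀ j : Fin d, Matrix (Fin (n j)) (Fin (n (j + 1))) K)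
    (k : ℕ) (hk : ∀ j, k ≤ n j)
    (S : ∀ j : Fin d, Finset (Fin (n j))) (hS : ∀ j, (S j).card = k) :
    ∑ π : (∀ j : Fin d, Equiv.Perm (Fin (n j))),
        ∏ j : Fin d,
          minorDet ((π j).permMatrix K * A j * ((π (j + 1)).permMatrix K)⁻¹) (S j) (S (j + 1)) =
      ((∏ j : Fin d, k.factorial * (n j - k).factorial : ℕ) : K) * minorSum (cycProd A) k := by
  have h1 : ∀ π : (∀ j : Fin d, Equiv.Perm (Fin (n j))), ∀ j,
      minorDet ((π j).permMatrix K * A j * ((π (j + 1)).permMatrix K)⁻¹) (S j) (S (j + 1)) =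
        cDet (A j) (π j ∘ (S j).orderEmbOfFin (hS j))
          (π (j + 1) ∘ (S (j + 1)).orderEmbOfFin (hS (j + 1))) :=
    fun π j => minorDet_perm_s6 _ _ _ _ _ _ _
  simp only [h1]
  have h2 := sum_perm_pi (K := K) n (fun j => (S j).orderEmbOfFin (hS j))
    (fun j => ((S j).orderEmbOfFin (hS j)).injective)
    (fun f => ∏ j : Fin d, cDet (A j) (f j) (f (j + 1))) (by
      rintro f ⟨j, hj⟩
      exact Finset.prod_eq_zero (Finset.mem_univ j) (cDet_row_zero _ _ _ hj))
  rw [h2, main_sum, Finset.prod_mul_distrib]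
  push_cast
  ring
end

section
/- Let K be a commutative ring, n and k natural numbers with k ≤ n, and let S, T, U, V be subsets of {1,…,n} each of size k. If |S ∩ V| ≠ |T ∩ U|, then ∑_{P ∈ 𝒫_n} [P]_{S,T}·[P^{-1}]_{U,V} = 0. -/
theorem minorDet_perm_aux {K : Type} [CommRing K] {n : ℕ} (π : Equiv.Perm (Fin n))
    (S T : Finset (Fin n)) (h : T.card = S.card)
    (hne : minorDet (π.permMatrix K) S T ≠ 0) : S.map π.toEmbedding = T := by
  apply Finset.eq_of_subset_of_card_le
  · intro x hx
    obtain ⟨s, hs, rfl⟩ := Finset.mem_map.1 hx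
    by_contra hT
    apply hne
    unfold minorDet
    rw [dif_pos h]
    have hs' : s ∈ Set.range (S.orderEmbOfFin rfl) := by simpa using hs
    obtain ⟨i, hi⟩ := hs'
    apply Matrix.det_eq_zero_of_row_eq_zero i
    intro j
    have hj : T.orderEmbOfFin h j ∈ T := Finset.orderEmbOfFin_mem T h j
    have : π s ≠ T.orderEmbOfFin h j := fun e => hT (by simpa [e] using hj)
    rw [Matrix.submatrix_apply, hi]
    simp [Equiv.Perm.permMatrix, PEquiv.toMatrix_apply, this]
  · simp [h]

theorem stmt_10 {K : Type} [CommRing K] (n k : ℕ) (hkn : k ≤ n)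
    (S T U V : Finset (Fin n))
    (hS : S.card = k) (hT : T.card = k) (hU : U.card = k) (hV : V.card = k)
    (hne : (S ∩ V).card ≠ (T ∩ U).card) :
    ∑ π : Equiv.Perm (Fin n),
        minorDet (π.permMatrix K) S T * minorDet ((π⁻¹).permMatrix K) U V = 0 := by
  apply Finset.sum_eq_zero
  intro π _
  by_contra h
  have h1 := minorDet_perm_aux π S T (hT.trans hS.symm) (left_ne_zero_of_mul h)
  have h2 := minorDet_perm_aux π⁻¹ U V (hV.trans hU.symm) (right_ne_zero_of_mul h)
  apply hne
  have h3 : V.map π.toEmbedding = U := by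
    rw [← h2]
    ext x
    simp only [Finset.mem_map_equiv]
    have : (Equiv.symm π⁻¹) ((Equiv.symm π) x) = x := π.apply_symm_apply x
    rw [this]
  rw [← h1, ← h3, ← Finset.map_inter, Finset.card_map]
end
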